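/- Assume the WENO weight setup in the jump setting. If the substencil with index i crosses the jump (i.e. i ≤ l ≤ i+r−1), then I_{R,i,h} converges, as h → 0⁺, to the strictly positive limit ((f_R(z) − f_L(z))/(c_{l+1} − c_l))²; if instead the substencil with index i is clean, then there exist C > 0 and h₀ > 0 such that I_{R,i,h} ≤ C·h² for all 0 < h < h₀. -/

import Mathlib

/-- Simple smoothness indicator `I_{R,i,h}` on the nonuniform stencil `x_{i,h} = z + cᵢ h`,
with `r = ⌊(R-1)/2⌋`. -/
noncomputable def wenoI (R : ℕ) (c : ℕ → ℝ) (z : ℝ) (f : ℝ → ℝ) (i : ℕ) (h : ℝ) : ℝ :=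
  ∑ j ∈ Finset.Ico i (i + (R - 1) / 2),
    ((f (z + c (j + 1) * h) - f (z + c j * h)) / (c (j + 1) - c j)) ^ 2

/-!
As `h → 0⁺` the node `z + α h` reaches `z` from the left if `α < 0` and from the right if `0 ≤ α`.
Hence the value of `f` there is its one-sided limit on that side, up to `O(h)`. The two one-sided
limits cancel in the difference between neighbouring nodes on the same side, which leaves a term
`O(h)²`; only the pair straddling the jump keeps the nonzero difference of the two limits.
-/

open Filter Asymptotics Set
open scoped Topology

section OneSidedLimits

variable {E : Type*} {f : ℝ → E} {z : ℝ} {a b : E}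

/-- The limit of `f (z + α * h)` as `h → 0⁺`, for a function `f` with left limit `a` at `z` and
limit `b` along `[z, ∞)`. A node with `α = 0` counts as lying on the right of the jump. -/
noncomputable def jumpValue (a b : E) (α : ℝ) : E :=
  if α < 0 then a else b

lemma jumpValue_of_neg {α : ℝ} (hα : α < 0) : jumpValue a b α = a :=
  if_pos hα

lemma jumpValue_of_nonneg {α : ℝ} (hα : 0 ≤ α) : jumpValue a b α = b :=
  if_neg hα.not_gt

lemma jumpValue_congr {α β : ℝ} (h : α < 0 ↔ β < 0) : jumpValue a b α = jumpValue a b β := by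
  simp only [jumpValue, h]

lemma tendsto_add_mul_nhdsWithin {α : ℝ} {s : Set ℝ} (hs : ∀ h > 0, z + α * h ∈ s) :
    Tendsto (fun h : ℝ => z + α * h) (𝓝[>] 0) (𝓝[s] z) := by
  have hcont : Continuous fun h : ℝ => z + α * h := by fun_prop
  refine tendsto_nhdsWithin_iff.mpr ⟨?_, eventually_mem_nhdsWithin.mono hs⟩
  simpa using (hcont.tendsto 0).mono_left nhdsWithin_le_nhds

lemma tendsto_add_mul_nhdsLT {α : ℝ} (hα : α < 0) :
    Tendsto (fun h : ℝ => z + α * h) (𝓝[>] 0) (𝓝[<] z) :=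
  tendsto_add_mul_nhdsWithin fun _ hh => add_lt_of_neg_right z (mul_neg_of_neg_of_pos hα hh)

lemma tendsto_add_mul_nhdsGE {α : ℝ} (hα : 0 ≤ α) :
    Tendsto (fun h : ℝ => z + α * h) (𝓝[>] 0) (𝓝[≥] z) :=
  tendsto_add_mul_nhdsWithin fun _ hh => le_add_of_nonneg_right (mul_nonneg hα hh.le)

lemma tendsto_comp_add_mul_jumpValue [TopologicalSpace E] (ha : Tendsto f (𝓝[<] z) (𝓝 a))
    (hb : Tendsto f (𝓝[≥] z) (𝓝 b)) (α : ℝ) :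
    Tendsto (fun h => f (z + α * h)) (𝓝[>] 0) (𝓝 (jumpValue a b α)) := by
  rcases lt_or_ge α 0 with hα | hα
  · rw [jumpValue_of_neg hα]
    exact ha.comp (tendsto_add_mul_nhdsLT hα)
  · rw [jumpValue_of_nonneg hα]
    exact hb.comp (tendsto_add_mul_nhdsGE hα)

lemma isBigO_comp_add_mul_sub_jumpValue [SeminormedAddCommGroup E]
    (ha : (fun x => f x - a) =O[𝓝[<] z] fun x => x - z)
    (hb : (fun x => f x - b) =O[𝓝[≥] z] fun x => x - z) (α : ℝ) :
    (fun h => f (z + α * h) - jumpValue a b α) =O[𝓝[>] 0] fun h => h := by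
  have hnode : (fun h : ℝ => z + α * h - z) =O[𝓝[>] 0] fun h => h := by
    simpa only [add_sub_cancel_left] using isBigO_const_mul_self α (fun h : ℝ => h) _
  rcases lt_or_ge α 0 with hα | hα
  · rw [jumpValue_of_neg hα]
    exact (ha.comp_tendsto (tendsto_add_mul_nhdsLT hα)).trans hnode
  · rw [jumpValue_of_nonneg hα]
    exact (hb.comp_tendsto (tendsto_add_mul_nhdsGE hα)).trans hnode

end OneSidedLimits

lemma tendsto_nhdsWithin_of_isBigO_sub {E F : Type*} [NormedAddCommGroup E]
    [NormedAddCommGroup F] {f : E → F} {z : E} {a : F} {s : Set E}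
    (h : (fun x => f x - a) =O[𝓝[s] z] fun x => x - z) : Tendsto f (𝓝[s] z) (𝓝 a) := by
  have hz : Tendsto (fun x => x - z) (𝓝[s] z) (𝓝 0) :=
    tendsto_sub_nhds_zero_iff.mpr nhdsWithin_le_nhds
  exact tendsto_sub_nhds_zero_iff.mp (h.trans_tendsto hz)

lemma isBigO_sub_nhdsWithin_of_eqOn {𝕜 E F : Type*} [NontriviallyNormedField 𝕜]
    [NormedAddCommGroup E] [NormedSpace 𝕜 E] [NormedAddCommGroup F] [NormedSpace 𝕜 F]
    {f g : E → F} {z : E} {s : Set E} (hg : DifferentiableAt 𝕜 g z) (hfg : EqOn f g s) :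
    (fun x => f x - g z) =O[𝓝[s] z] fun x => x - z := by
  refine (hg.isBigO_sub.mono nhdsWithin_le_nhds).congr' ?_ EventuallyEq.rfl
  filter_upwards [self_mem_nhdsWithin] with x hx
  rw [hfg hx]

lemma exists_pos_forall_norm_le_of_isBigO_nhdsGT {E F : Type*} [Norm E]
    [SeminormedAddCommGroup F] {u : ℝ → E} {v : ℝ → F} (huv : u =O[𝓝[>] 0] v) :
    ∃ C > (0 : ℝ), ∃ h₀ > (0 : ℝ), ∀ h : ℝ, 0 < h → h < h₀ → ‖u h‖ ≤ C * ‖v h‖ := by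
  obtain ⟨C, hC, hbound⟩ := huv.exists_pos
  obtain ⟨h₀, hh₀, hsub⟩ := mem_nhdsGT_iff_exists_Ioo_subset.mp hbound.bound
  exact ⟨C, hC, h₀, hh₀, fun h hpos hlt => hsub ⟨hpos, hlt⟩⟩

lemma lt_iff_le_of_monotoneOn_Iio {α : Type*} [Preorder α] {c : ℕ → α} {x : α} {R l j : ℕ}
    (hc : MonotoneOn c (Iio R)) (hl : l < R) (hlx : c l < x) (hxl : x ≤ c (l + 1)) (hj : j < R) :
    c j < x ↔ j ≤ l := by
  refine ⟨fun hjx => ?_, fun hjl => (hc hj hl hjl).trans_lt hlx⟩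
  by_contra! hlj
  exact (hxl.trans (hc (lt_of_le_of_lt hlj hj) hj hlj)).not_gt hjx

section SmoothnessIndicator

variable {R : ℕ} {c : ℕ → ℝ} {z a b : ℝ} {f : ℝ → ℝ} {i l : ℕ}

lemma tendsto_wenoI (ha : Tendsto f (𝓝[<] z) (𝓝 a)) (hb : Tendsto f (𝓝[≥] z) (𝓝 b)) :
    Tendsto (wenoI R c z f i) (𝓝[>] 0)
      (𝓝 (∑ j ∈ Finset.Ico i (i + (R - 1) / 2),
        ((jumpValue a b (c (j + 1)) - jumpValue a b (c j)) / (c (j + 1) - c j)) ^ 2)) :=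
  tendsto_finsetSum _ fun j _ =>
    (((tendsto_comp_add_mul_jumpValue ha hb (c (j + 1))).sub
      (tendsto_comp_add_mul_jumpValue ha hb (c j))).div_const _).pow 2

lemma tendsto_wenoI_of_crosses (ha : Tendsto f (𝓝[<] z) (𝓝 a)) (hb : Tendsto f (𝓝[≥] z) (𝓝 b))
    (hsign : ∀ j ≤ i + (R - 1) / 2, (c j < 0 ↔ j ≤ l)) (hil : i ≤ l)
    (hli : l < i + (R - 1) / 2) :
    Tendsto (wenoI R c z f i) (𝓝[>] 0) (𝓝 (((b - a) / (c (l + 1) - c l)) ^ 2)) := by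
  have hcl : c l < 0 := (hsign l hli.le).mpr le_rfl
  have hcl' : 0 ≤ c (l + 1) := not_lt.mp fun h => by simpa using (hsign (l + 1) hli).mp h
  convert tendsto_wenoI (R := R) (c := c) (i := i) ha hb using 2
  rw [Finset.sum_eq_single_of_mem l (Finset.mem_Ico.mpr ⟨hil, hli⟩),
    jumpValue_of_neg hcl, jumpValue_of_nonneg hcl']
  intro j hj hjl
  have hjr : j < i + (R - 1) / 2 := (Finset.mem_Ico.mp hj).2
  have hside : c (j + 1) < 0 ↔ c j < 0 := by
    rw [hsign (j + 1) hjr, hsign j hjr.le]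
    lia
  rw [jumpValue_congr hside, sub_self, zero_div, zero_pow two_ne_zero]

lemma isBigO_wenoI_of_clean (ha : (fun x => f x - a) =O[𝓝[<] z] fun x => x - z)
    (hb : (fun x => f x - b) =O[𝓝[≥] z] fun x => x - z)
    (hside : ∀ j ∈ Finset.Ico i (i + (R - 1) / 2), (c (j + 1) < 0 ↔ c j < 0)) :
    wenoI R c z f i =O[𝓝[>] 0] fun h => h ^ 2 := by
  refine IsBigO.fun_sum fun j hj => IsBigO.pow ?_ 2
  have hdiff : (fun h => f (z + c (j + 1) * h) - f (z + c j * h)) =O[𝓝[>] 0] fun h => h := by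
    simpa only [jumpValue_congr (hside j hj), sub_sub_sub_cancel_right] using
      (isBigO_comp_add_mul_sub_jumpValue ha hb (c (j + 1))).sub
        (isBigO_comp_add_mul_sub_jumpValue ha hb (c j))
  simpa only [div_eq_inv_mul] using hdiff.const_mul_left (c (j + 1) - c j)⁻¹

theorem stmt_14_general (hR : 3 ≤ R) (hc : StrictMonoOn c (Iio R))
    (ha : (fun x => f x - a) =O[𝓝[<] z] fun x => x - z)
    (hb : (fun x => f x - b) =O[𝓝[≥] z] fun x => x - z) (hab : a ≠ b)
    (hl : l + 1 < R) (hcl : c l < 0) (hcl' : 0 ≤ c (l + 1)) (hi : i ≤ R / 2) :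
    ((i ≤ l ∧ l ≤ i + (R - 1) / 2 - 1) →
      0 < ((b - a) / (c (l + 1) - c l)) ^ 2 ∧
        Tendsto (wenoI R c z f i) (𝓝[>] 0) (𝓝 (((b - a) / (c (l + 1) - c l)) ^ 2))) ∧
    (¬(i ≤ l ∧ l ≤ i + (R - 1) / 2 - 1) →
      ∃ C > (0 : ℝ), ∃ h₀ > (0 : ℝ), ∀ h : ℝ, 0 < h → h < h₀ →
        wenoI R c z f i h ≤ C * h ^ 2) := by
  have hsign : ∀ j ≤ i + (R - 1) / 2, (c j < 0 ↔ j ≤ l) := fun j hj =>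
    lt_iff_le_of_monotoneOn_Iio hc.monotoneOn (by lia) hcl hcl' (by lia)
  refine ⟨fun ⟨hil, hli⟩ => ⟨?_, ?_⟩, fun hclean => ?_⟩
  · exact sq_pos_of_ne_zero (div_ne_zero (sub_ne_zero.mpr hab.symm) (by linarith))
  · exact tendsto_wenoI_of_crosses (tendsto_nhdsWithin_of_isBigO_sub ha)
      (tendsto_nhdsWithin_of_isBigO_sub hb) hsign hil (hli.trans_lt (by lia))
  · have hside : ∀ j ∈ Finset.Ico i (i + (R - 1) / 2), (c (j + 1) < 0 ↔ c j < 0) := by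
      intro j hj
      obtain ⟨hij, hjr⟩ := Finset.mem_Ico.mp hj
      rw [hsign (j + 1) hjr, hsign j hjr.le]
      lia
    obtain ⟨C, hC, h₀, hh₀, hbound⟩ :=
      exists_pos_forall_norm_le_of_isBigO_nhdsGT (isBigO_wenoI_of_clean ha hb hside)
    refine ⟨C, hC, h₀, hh₀, fun h hpos hlt => (Real.le_norm_self _).trans ?_⟩
    simpa only [Real.norm_of_nonneg (sq_nonneg h)] using hbound h hpos hlt

end SmoothnessIndicator

/-- **Smoothness indicators in the jump setting.** If the `i`-th substencil crosses the jump,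
then `I_{R,i,h}` converges as `h → 0⁺` to the strictly positive limit
`((f_R(z) - f_L(z))/(c_{l+1} - c_l))²`; if the substencil is clean, `I_{R,i,h} = O(h²)`. -/
theorem stmt_14 (R : ℕ) (hR : 3 ≤ R) (c : ℕ → ℝ)
    (hc : ∀ i j : ℕ, i < j → j < R → c i < c j)
    (z : ℝ) (fL fR f : ℝ → ℝ) (U : Set ℝ) (hU : U ∈ nhds z)
    (hfL : ContDiffOn ℝ (⊤ : ℕ∞) fL U) (hfR : ContDiffOn ℝ (⊤ : ℕ∞) fR U)
    (hjump : fL z ≠ fR z)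
    (hf : ∀ x : ℝ, f x = if x < z then fL x else fR x)
    (l : ℕ) (hl : l + 1 < R) (hcl : c l < 0) (hcl' : 0 ≤ c (l + 1))
    (i : ℕ) (hi : i ≤ R / 2) :
    ((i ≤ l ∧ l ≤ i + (R - 1) / 2 - 1) →
      0 < ((fR z - fL z) / (c (l + 1) - c l)) ^ 2 ∧
        Filter.Tendsto (fun h : ℝ => wenoI R c z f i h)
          (nhdsWithin 0 (Set.Ioi 0))
          (nhds (((fR z - fL z) / (c (l + 1) - c l)) ^ 2))) ∧
    (¬(i ≤ l ∧ l ≤ i + (R - 1) / 2 - 1) →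
      ∃ C > (0 : ℝ), ∃ h₀ > (0 : ℝ), ∀ h : ℝ, 0 < h → h < h₀ →
        wenoI R c z f i h ≤ C * h ^ 2) := by
  have hdL : DifferentiableAt ℝ fL z := (hfL.contDiffAt hU).differentiableAt (by simp)
  have hdR : DifferentiableAt ℝ fR z := (hfR.contDiffAt hU).differentiableAt (by simp)
  exact stmt_14_general hR (fun i _ j hj hij => hc i j hij hj)
    (isBigO_sub_nhdsWithin_of_eqOn hdL fun x hx => (hf x).trans (if_pos hx))
    (isBigO_sub_nhdsWithin_of_eqOn hdR fun x hx => (hf x).trans (if_neg (not_lt.mpr hx)))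
    hjump hl hcl hcl' hi
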